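/- Every 3-extremal map in the Euclidean unit ball 𝔹_n (n ≥ 2) that is not a 2-extremal is, up to composition with an automorphism of 𝔹_n, of the form λ ↦ (λa₁, √(1−a₁²)·λ·m(λ), 0, …, 0) where a₁ ∈ [0,1) and m is a Möbius automorphism of 𝔻. -/

import Mathlib

open Complex Metric Set

noncomputable section

/-- The open unit disc in `ℂ`. -/
def 𝔻 : Set ℂ := Metric.ball 0 1

/-- `B` is a Blaschke product of degree `m` on the unit disc: a unimodular constant
times a product of `m` Möbius factors. -/
def IsBlaschke (m : ℕ) (B : ℂ → ℂ) : Prop :=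
  ∃ (ω : ℂ) (a : Fin m → ℂ), ‖ω‖ = 1 ∧ (∀ j, a j ∈ 𝔻) ∧
    ∀ z ∈ 𝔻, B z = ω * ∏ j, (a j - z) / (1 - (starRingEnd ℂ) (a j) * z)

variable {E : Type*} [NormedAddCommGroup E] [NormedSpace ℂ E]

/-- The interpolation data `lam j ↦ f (lam j)` is extremally solvable (through `f`):
no map holomorphic on a neighbourhood of the closed unit disc with values in `D`
interpolates `f` at the points `lam j`. -/
def ExtSolv (D : Set E) {m : ℕ} (lam : Fin m → ℂ) (f : ℂ → E) : Prop :=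
  ¬ ∃ (U : Set ℂ) (g : ℂ → E), IsOpen U ∧ Metric.closedBall (0 : ℂ) 1 ⊆ U ∧
      DifferentiableOn ℂ g U ∧ (∀ z ∈ U, g z ∈ D) ∧ ∀ j, g (lam j) = f (lam j)

/-- `f : 𝔻 → D` is a weak `m`-extremal with respect to the distinct points `lam`. -/
def IsWeakExtremal (D : Set E) {m : ℕ} (lam : Fin m → ℂ) (f : ℂ → E) : Prop :=
  DifferentiableOn ℂ f 𝔻 ∧ (∀ z ∈ 𝔻, f z ∈ D) ∧ ExtSolv D lam f

/-- `f : 𝔻 → D` is `m`-extremal: for all choices of `m` distinct points of `𝔻` the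
corresponding interpolation data is extremally solvable. -/
def IsMExtremal (D : Set E) (m : ℕ) (f : ℂ → E) : Prop :=
  DifferentiableOn ℂ f 𝔻 ∧ (∀ z ∈ 𝔻, f z ∈ D) ∧
    ∀ lam : Fin m → ℂ, Function.Injective lam → (∀ j, lam j ∈ 𝔻) → ExtSolv D lam f

/-- The Minkowski functional of a set `D`. -/
def mink (D : Set E) (z : E) : ℝ := sInf {t : ℝ | 0 < t ∧ ((t : ℂ))⁻¹ • z ∈ D}

/-- `φ` is a holomorphic automorphism of `D`. -/
def IsAutomorphismOf (D : Set E) (φ : E → E) : Prop :=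
  DifferentiableOn ℂ φ D ∧ Set.MapsTo φ D D ∧
    ∃ ψ : E → E, DifferentiableOn ℂ ψ D ∧ Set.MapsTo ψ D D ∧
      (∀ z ∈ D, ψ (φ z) = z) ∧ (∀ z ∈ D, φ (ψ z) = z)

/-- The group of holomorphic automorphisms of `D` acts transitively. -/
def Homogeneous (D : Set E) : Prop :=
  ∀ z ∈ D, ∀ w ∈ D, ∃ φ : E → E, IsAutomorphismOf D φ ∧ φ z = w

/-- `f` is an `m`-complex geodesic of `D`: there is `F ∈ 𝒪(D, 𝔻)` such that `F ∘ f` is a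
non-constant Blaschke product of degree at most `m - 1`. -/
def IsComplexGeodesicOfOrder (D : Set E) (m : ℕ) (f : ℂ → E) : Prop :=
  DifferentiableOn ℂ f 𝔻 ∧ (∀ z ∈ 𝔻, f z ∈ D) ∧
    ∃ F : E → ℂ, DifferentiableOn ℂ F D ∧ (∀ z ∈ D, F z ∈ 𝔻) ∧
      ∃ k : ℕ, 1 ≤ k ∧ k ≤ m - 1 ∧ ∃ B : ℂ → ℂ, IsBlaschke k B ∧
        ∀ z ∈ 𝔻, F (f z) = B z

/-- The sub-mean-value property on circles, for a real function on a subset of `ℂ`. -/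
def SubmeanOn (u : ℂ → ℝ) (S : Set ℂ) : Prop :=
  ∀ (c : ℂ) (r : ℝ), 0 < r → Metric.closedBall c r ⊆ S →
    u c ≤ (2 * Real.pi)⁻¹ * ∫ θ in (0:ℝ)..(2 * Real.pi), u (c + r * Complex.exp (θ * Complex.I))

/-- `u` is plurisubharmonic on `D`: upper semicontinuous and submean on every complex line. -/
def PlurisubharmonicOn (u : E → ℝ) (D : Set E) : Prop :=
  UpperSemicontinuousOn u D ∧
    ∀ (z v : E), SubmeanOn (fun w : ℂ => u (z + w • v)) {w : ℂ | z + w • v ∈ D}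

/-- Hartogs pseudoconvexity: `- log dist(·, ∂D)` is plurisubharmonic on `D`. -/
def IsPseudoconvex (D : Set E) : Prop :=
  PlurisubharmonicOn (fun z => - Real.log (Metric.infDist z Dᶜ)) D


section Helpers

/-- The involutive automorphism of the unit ball exchanging `0` and `p`. -/
def ballAut {H : Type*} [NormedAddCommGroup H] [InnerProductSpace ℂ H] (p z : H) : H :=
  (1 - inner ℂ p z)⁻¹ •
    ((1 - inner ℂ p z * (((1 + Real.sqrt (1 - ‖p‖ ^ 2))⁻¹ : ℝ) : ℂ)) • p -
      ((Real.sqrt (1 - ‖p‖ ^ 2) : ℝ) : ℂ) • z)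

/-- The scalar Möbius involution. -/
def mob (a z : ℂ) : ℂ := (a - z) / (1 - (starRingEnd ℂ) a * z)

variable {H : Type*} [NormedAddCommGroup H] [InnerProductSpace ℂ H]

lemma den_ne {p z : H} (hp : ‖p‖ < 1) (hz : ‖z‖ ≤ 1) : (1 : ℂ) - inner ℂ p z ≠ 0 := by
  intro h
  have h1 : inner ℂ p z = (1 : ℂ) := by linear_combination -h
  have h2 := norm_inner_le_norm (𝕜 := ℂ) p z
  rw [h1] at h2
  simp at h2
  nlinarith [norm_nonneg p, norm_nonneg z]

lemma ballAut_norm {p z : H} (hp : ‖p‖ < 1) (hD : (1 : ℂ) - inner ℂ p z ≠ 0) :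
    ‖1 - inner ℂ p z‖ ^ 2 * (1 - ‖ballAut p z‖ ^ 2) = (1 - ‖p‖ ^ 2) * (1 - ‖z‖ ^ 2) := by
  have hs0 : 0 ≤ 1 - ‖p‖ ^ 2 := by nlinarith [norm_nonneg p]
  have hs := Real.sq_sqrt hs0
  have hs1 := Real.sqrt_nonneg (1 - ‖p‖ ^ 2)
  unfold ballAut
  set s := Real.sqrt (1 - ‖p‖ ^ 2) with hsdef
  have ht : (1 + s)⁻¹ * (1 + s) = 1 := inv_mul_cancel₀ (by positivity)
  set t := (1 + s)⁻¹
  have hD' : ‖(1 : ℂ) - inner ℂ p z‖ ≠ 0 := norm_ne_zero_iff.mpr hD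
  rw [norm_smul, norm_inv, mul_pow, inv_pow, mul_sub, mul_one,
    mul_inv_cancel_left₀ (pow_ne_zero 2 hD')]
  rw [@norm_sub_sq ℂ H _ _ _ (_ • p) (_ • z)]
  simp only [norm_smul, inner_smul_left, inner_smul_right, mul_pow, Complex.norm_real,
    Real.norm_eq_abs, sq_abs]
  generalize inner ℂ p z = c
  have e : ∀ w : ℂ, ‖w‖ ^ 2 = w.re ^ 2 + w.im ^ 2 := by
    intro w; rw [Complex.sq_norm, Complex.normSq_apply]; ring
  have hp2 : ‖p‖ ^ 2 = 1 - s ^ 2 := by linarith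
  rw [e, e, hp2]
  simp
  grind

lemma ballAut_invol {p z : H} (hp : ‖p‖ < 1) (hz : ‖z‖ ≤ 1) : ballAut p (ballAut p z) = z := by
  have hD := den_ne hp hz
  have hs0 : 0 < 1 - ‖p‖ ^ 2 := by nlinarith [norm_nonneg p]
  have hs := Real.sq_sqrt hs0.le
  have hs1 := Real.sqrt_pos.mpr hs0
  have hin : (inner ℂ p p : ℂ) = ((‖p‖ ^ 2 : ℝ) : ℂ) := by
    rw [inner_self_eq_norm_sq_to_K]; simp
  have hs' : ((‖p‖ ^ 2 : ℝ) : ℂ) = 1 - ((Real.sqrt (1 - ‖p‖ ^ 2) : ℝ) : ℂ) ^ 2 := by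
    rw [← Complex.ofReal_pow, hs]; push_cast; ring
  have hiw : inner ℂ p (ballAut p z) = (((‖p‖ ^ 2 : ℝ) : ℂ) - inner ℂ p z) / (1 - inner ℂ p z) := by
    unfold ballAut
    simp only [inner_smul_right, inner_sub_right, hin]
    rw [hs']
    set s := Real.sqrt (1 - ‖p‖ ^ 2)
    have hne : (1 : ℂ) + s ≠ 0 := by
      have : (1 + s : ℝ) ≠ 0 := by positivity
      exact_mod_cast this
    push_cast
    field_simp
    ring
  have hsne : ((Real.sqrt (1 - ‖p‖ ^ 2) : ℝ) : ℂ) ≠ 0 := by exact_mod_cast hs1.ne'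
  have h1 : 1 - inner ℂ p (ballAut p z) =
      ((Real.sqrt (1 - ‖p‖ ^ 2) : ℝ) : ℂ) ^ 2 / (1 - inner ℂ p z) := by
    rw [hiw, hs']; field_simp; ring
  have h2 : ballAut p (ballAut p z) = (1 - inner ℂ p (ballAut p z))⁻¹ •
    ((1 - inner ℂ p (ballAut p z) * (((1 + Real.sqrt (1 - ‖p‖ ^ 2))⁻¹ : ℝ) : ℂ)) • p -
      ((Real.sqrt (1 - ‖p‖ ^ 2) : ℝ) : ℂ) • (ballAut p z)) := rfl
  rw [h2, h1, hiw, hs']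
  unfold ballAut
  set s := Real.sqrt (1 - ‖p‖ ^ 2)
  have hne : (1 : ℂ) + s ≠ 0 := by
    have : (1 + s : ℝ) ≠ 0 := by positivity
    exact_mod_cast this
  push_cast
  generalize inner ℂ p z = c at *
  match_scalars
  · field_simp
    ring
  · field_simp

lemma ballAut_zero (p : H) : ballAut p 0 = p := by simp [ballAut]

lemma ballAut_self {p : H} (hp : ‖p‖ < 1) : ballAut p p = 0 := by
  have := ballAut_invol hp (z := 0) (by simp)
  rwa [ballAut_zero] at this

lemma ballAut_lt {p z : H} (hp : ‖p‖ < 1) (hz : ‖z‖ < 1) : ‖ballAut p z‖ < 1 := by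
  have hD := den_ne hp hz.le
  have h := ballAut_norm hp hD
  have h1 : 0 < ‖(1 : ℂ) - inner ℂ p z‖ ^ 2 := by
    have := norm_pos_iff.mpr hD
    positivity
  have h2 : 0 < (1 - ‖p‖ ^ 2) * (1 - ‖z‖ ^ 2) := by
    apply mul_pos <;> nlinarith [norm_nonneg p, norm_nonneg z]
  rw [← h] at h2
  have h3 := pos_of_mul_pos_right h2 h1.le
  nlinarith [norm_nonneg (ballAut p z)]

lemma ballAut_diff {p : H} (hp : ‖p‖ < 1) :
    DifferentiableOn ℂ (ballAut p) (Metric.ball (0 : H) 1) := by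
  have hi : Differentiable ℂ (fun z : H => (inner ℂ p z : ℂ)) := (innerSL ℂ p).differentiable
  unfold ballAut
  intro z hz
  have hD := den_ne hp (z := z) (by simpa using (mem_ball_zero_iff.mp hz).le)
  apply DifferentiableAt.differentiableWithinAt
  have hi' := hi z
  fun_prop (disch := exact hD)

lemma ballAut_isAut {p : H} (hp : ‖p‖ < 1) :
    IsAutomorphismOf (Metric.ball (0 : H) 1) (ballAut p) := by
  have hm : Set.MapsTo (ballAut p) (Metric.ball (0 : H) 1) (Metric.ball (0 : H) 1) := by
    intro z hz
    rw [mem_ball_zero_iff] at *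
    exact ballAut_lt hp hz
  have hv : ∀ z ∈ Metric.ball (0 : H) 1, ballAut p (ballAut p z) = z := fun z hz =>
    ballAut_invol hp (mem_ball_zero_iff.mp hz).le
  exact ⟨ballAut_diff hp, hm, ballAut p, ballAut_diff hp, hm, hv, hv⟩

lemma mob_eq {a : ℂ} (ha : ‖a‖ < 1) (z : ℂ) : mob a z = ballAut a z := by
  have hs0 : 0 < 1 - ‖a‖ ^ 2 := by nlinarith [norm_nonneg a]
  have hs := Real.sq_sqrt hs0.le
  have hs1 := Real.sqrt_pos.mpr hs0
  unfold mob ballAut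
  have hin : a * (starRingEnd ℂ) a = 1 - ((Real.sqrt (1 - ‖a‖ ^ 2) : ℝ) : ℂ) ^ 2 := by
    rw [← Complex.ofReal_pow, hs, Complex.mul_conj, Complex.normSq_eq_norm_sq]; push_cast; ring
  set s := Real.sqrt (1 - ‖a‖ ^ 2)
  have hne : (1 : ℂ) + s ≠ 0 := by
    have : (1 + s : ℝ) ≠ 0 := by positivity
    exact_mod_cast this
  simp only [smul_eq_mul, RCLike.inner_apply]
  rw [div_eq_inv_mul, mul_comm z]
  congr 1
  push_cast
  field_simp
  linear_combination z * hin

/-- Schwarz lemma with its equality case. -/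
lemma schwarz_eq {f : ℂ → H} (hd : DifferentiableOn ℂ f (Metric.ball 0 1))
    (hm : Set.MapsTo f (Metric.ball 0 1) (Metric.ball 0 1)) (h0 : f 0 = 0)
    {z : ℂ} (hz : z ∈ Metric.ball (0 : ℂ) 1) (hz1 : 1 ≤ ‖dslope f 0 z‖) :
    ∀ y ∈ Metric.ball (0 : ℂ) 1, f y = y • dslope f 0 z := by
  have hm' : Set.MapsTo f (Metric.ball 0 1) (Metric.closedBall (f 0) 1) := by
    rw [h0]; exact hm.mono_right Metric.ball_subset_closedBall
  have h1 := Complex.norm_dslope_le_div_of_mapsTo_ball hd hm' hz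
  have : StrictConvexSpace ℝ H := by
    let _ : InnerProductSpace ℝ H := InnerProductSpace.complexToReal
    exact (inferInstance : StrictConvexSpace ℝ H)
  have h2 := Complex.affine_of_mapsTo_ball_of_norm_dslope_eq_div hd hm' hz
    (le_antisymm h1 (by simpa using hz1))
  intro y hy
  simpa [h0] using h2 hy

lemma mob_den_ne {a z : ℂ} (ha : ‖a‖ < 1) (hz : ‖z‖ ≤ 1) :
    1 - (starRingEnd ℂ) a * z ≠ 0 := by
  have := den_ne ha hz
  rwa [RCLike.inner_apply, mul_comm] at this

lemma mob_lt {a z : ℂ} (ha : ‖a‖ < 1) (hz : ‖z‖ < 1) : ‖mob a z‖ < 1 := by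
  rw [mob_eq ha]; exact ballAut_lt ha hz

lemma mob_invol {a z : ℂ} (ha : ‖a‖ < 1) (hz : ‖z‖ ≤ 1) : mob a (mob a z) = z := by
  rw [mob_eq ha, mob_eq ha]; exact ballAut_invol ha hz

lemma ballAut_eq_one {p z : H} (hp : ‖p‖ < 1) (hz : ‖z‖ = 1) : ‖ballAut p z‖ = 1 := by
  have hD := den_ne hp hz.le
  have h := ballAut_norm hp hD
  have h1 : ‖(1 : ℂ) - inner ℂ p z‖ ^ 2 ≠ 0 := pow_ne_zero 2 (norm_ne_zero_iff.mpr hD)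
  rw [hz] at h
  have h2 : 1 - ‖ballAut p z‖ ^ 2 = 0 := by
    have : ‖(1 : ℂ) - inner ℂ p z‖ ^ 2 * (1 - ‖ballAut p z‖ ^ 2) = 0 := by rw [h]; ring
    exact (mul_eq_zero.mp this).resolve_left h1
  nlinarith [norm_nonneg (ballAut p z)]

lemma mob_le {a z : ℂ} (ha : ‖a‖ < 1) (hz : ‖z‖ ≤ 1) : ‖mob a z‖ ≤ 1 := by
  rcases hz.lt_or_eq with h | h
  · exact (mob_lt ha h).le
  · rw [mob_eq ha]; exact (ballAut_eq_one ha h).le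

lemma mob_diff {a : ℂ} :
    DifferentiableOn ℂ (mob a) {z | 1 - (starRingEnd ℂ) a * z ≠ 0} := by
  intro z hz
  have hz' : 1 - (starRingEnd ℂ) a * z ≠ 0 := hz
  unfold mob
  apply DifferentiableAt.differentiableWithinAt
  fun_prop (disch := exact hz')

lemma mob_diff_ball {a : ℂ} (ha : ‖a‖ < 1) :
    DifferentiableOn ℂ (mob a) (Metric.ball 0 1) :=
  mob_diff.mono fun _ hz => mob_den_ne ha (mem_ball_zero_iff.mp hz).le

lemma mob_maps {a : ℂ} (ha : ‖a‖ < 1) :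
    Set.MapsTo (mob a) (Metric.ball 0 1) (Metric.ball 0 1) := fun _ hz =>
  mem_ball_zero_iff.mpr (mob_lt ha (mem_ball_zero_iff.mp hz))

lemma mob_zero (a : ℂ) : mob a 0 = a := by simp [mob]

lemma mob_self (a : ℂ) : mob a a = 0 := by simp [mob]

/-- Weak 2-extremals of the ball are geodesics. -/
lemma geodesic_of_ext {g : ℂ → H} (hd : DifferentiableOn ℂ g (Metric.ball 0 1))
    (hm : Set.MapsTo g (Metric.ball 0 1) (Metric.ball 0 1)) {x y : ℂ}
    (hx : ‖x‖ < 1) (hy : ‖y‖ < 1)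
    (hext : ¬ ∃ (U : Set ℂ) (h : ℂ → H), IsOpen U ∧ Metric.closedBall (0 : ℂ) 1 ⊆ U ∧
      DifferentiableOn ℂ h U ∧ (∀ z ∈ U, h z ∈ Metric.ball (0 : H) 1) ∧ h x = g x ∧ h y = g y) :
    ∃ w : H, ‖w‖ = 1 ∧ ∀ z ∈ Metric.ball (0 : ℂ) 1, g z = ballAut (g x) (mob x z • w) := by
  have hp : ‖g x‖ < 1 := mem_ball_zero_iff.mp (hm (mem_ball_zero_iff.mpr hx))
  set p := g x with hpdef
  obtain ⟨-, hAm, -⟩ := ballAut_isAut hp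
  set G : ℂ → H := fun z => ballAut p (g (mob x z)) with hG
  have hGd : DifferentiableOn ℂ G (Metric.ball 0 1) :=
    (ballAut_diff hp).comp (hd.comp (mob_diff_ball hx) (mob_maps hx)) (hm.comp (mob_maps hx))
  have hGm : Set.MapsTo G (Metric.ball 0 1) (Metric.ball 0 1) := hAm.comp (hm.comp (mob_maps hx))
  have hG0 : G 0 = 0 := by simp only [hG, mob_zero]; exact ballAut_self hp
  set μ := mob x y with hμ
  have hμ1 : ‖μ‖ < 1 := mob_lt hx hy
  have hμb : μ ∈ Metric.ball (0 : ℂ) 1 := mem_ball_zero_iff.mpr hμ1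
  have hμy : mob x μ = y := mob_invol hx hy.le
  have hgG : ∀ z ∈ Metric.ball (0 : ℂ) 1, g z = ballAut p (G (mob x z)) := by
    intro z hz
    have hz' := mem_ball_zero_iff.mp hz
    simp only [hG]
    rw [mob_invol hx hz'.le, ballAut_invol hp (mem_ball_zero_iff.mp (hm hz)).le]
  set w := dslope G 0 μ with hw
  have hGμ : G μ = μ • w := by
    have := sub_smul_dslope G 0 μ
    rw [hG0] at this
    simpa using this.symm
  have hw1 : ‖w‖ ≤ 1 := by
    have := Complex.norm_dslope_le_div_of_mapsTo_ball (R₂ := 1) hGd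
      (by rw [hG0]; exact hGm.mono_right Metric.ball_subset_closedBall) hμb
    simpa using this
  rcases hw1.lt_or_eq with hlt | heq
  · exfalso
    apply hext
    set V : Set ℂ := {z | 1 - (starRingEnd ℂ) x * z ≠ 0} with hV
    have hVo : IsOpen V := isOpen_ne_fun (by fun_prop) (by fun_prop)
    have hmd : DifferentiableOn ℂ (fun z => mob x z • w) V := mob_diff.smul_const w
    refine ⟨V ∩ (fun z => mob x z • w) ⁻¹' Metric.ball 0 1, fun z => ballAut p (mob x z • w),
      hmd.continuousOn.isOpen_inter_preimage hVo Metric.isOpen_ball, ?_, ?_, ?_, ?_, ?_⟩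
    · intro z hz
      have hz' := mem_closedBall_zero_iff.mp hz
      refine ⟨mob_den_ne hx hz', ?_⟩
      simp only [Set.mem_preimage, mem_ball_zero_iff, norm_smul]
      have := mob_le hx hz'
      nlinarith [norm_nonneg w, norm_nonneg (mob x z)]
    · exact (ballAut_diff hp).comp (hmd.mono Set.inter_subset_left) fun z hz => hz.2
    · intro z hz
      exact hAm hz.2
    · simp only [mob_self, zero_smul, ballAut_zero]
    · simp only
      rw [← hμ, ← hGμ, hμ, ← hgG y (mem_ball_zero_iff.mpr hy)]
  · refine ⟨w, heq, fun z hz => ?_⟩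
    rw [hgG z hz, schwarz_eq hGd hGm hG0 hμb (by rw [← hw, heq]) _ (mob_maps hx hz)]

lemma mob_comp_form {x e : ℂ} (hx : ‖x‖ < 1) (he : ‖e‖ < 1) :
    ∃ ω α : ℂ, ‖ω‖ = 1 ∧ ‖α‖ < 1 ∧ ∀ z ∈ Metric.ball (0 : ℂ) 1,
      mob e (mob x z) = ω * (α - z) / (1 - (starRingEnd ℂ) α * z) := by
  have hd : 1 - (starRingEnd ℂ) e * x ≠ 0 := mob_den_ne he hx.le
  have hd' : 1 - e * (starRingEnd ℂ) x ≠ 0 := by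
    intro h
    apply hd
    have := congrArg (starRingEnd ℂ) h
    simpa using this
  refine ⟨-((1 - e * (starRingEnd ℂ) x) / (1 - (starRingEnd ℂ) e * x)),
    (x - e) / (1 - e * (starRingEnd ℂ) x), ?_, ?_, ?_⟩
  · have : 1 - e * (starRingEnd ℂ) x = (starRingEnd ℂ) (1 - (starRingEnd ℂ) e * x) := by simp
    rw [norm_neg, norm_div, this, RCLike.norm_conj, div_self (norm_ne_zero_iff.mpr hd)]
  · have := mob_lt hx he
    unfold mob at this
    rwa [mul_comm] at this
  · intro z hz
    have hz' := mem_ball_zero_iff.mp hz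
    have h1 := mob_den_ne hx hz'.le
    have h2 := mob_den_ne he (mob_lt hx hz').le
    have hk : mob x z * (1 - (starRingEnd ℂ) x * z) = x - z := div_mul_cancel₀ _ h1
    have h3 : (1 - (starRingEnd ℂ) e * mob x z) * (1 - (starRingEnd ℂ) x * z) =
      (1 - (starRingEnd ℂ) e * x) - ((starRingEnd ℂ) x - (starRingEnd ℂ) e) * z := by
      linear_combination (-(starRingEnd ℂ) e) * hk
    have h4 : (1 - (starRingEnd ℂ) e * x) - ((starRingEnd ℂ) x - (starRingEnd ℂ) e) * z ≠ 0 := by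
      rw [← h3]; exact mul_ne_zero h2 h1
    have h5 : 1 - (starRingEnd ℂ) ((x - e) / (1 - e * (starRingEnd ℂ) x)) * z =
      ((1 - (starRingEnd ℂ) e * x) - ((starRingEnd ℂ) x - (starRingEnd ℂ) e) * z) /
        (1 - (starRingEnd ℂ) e * x) := by
      simp only [map_div₀, map_sub, map_mul, map_one, Complex.conj_conj]
      field_simp
    have h6 : mob e (mob x z) = ((e - mob x z) * (1 - (starRingEnd ℂ) x * z)) /
      ((1 - (starRingEnd ℂ) e * mob x z) * (1 - (starRingEnd ℂ) x * z)) := by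
      rw [mul_div_mul_right _ _ h1]; rfl
    have h7 : (e - mob x z) * (1 - (starRingEnd ℂ) x * z) =
       e - x + (1 - e * (starRingEnd ℂ) x) * z := by
      linear_combination -hk
    have h8 : e - x + (1 - e * (starRingEnd ℂ) x) * z =
      -((1 - e * (starRingEnd ℂ) x) * ((x - e) / (1 - e * (starRingEnd ℂ) x) - z)) := by
      rw [mul_sub, mul_div_cancel₀ _ hd']; ring
    rw [h5, h6, h3, h7, h8]
    generalize (1 - (starRingEnd ℂ) e * x) - ((starRingEnd ℂ) x - (starRingEnd ℂ) e) * z = D4 at *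
    generalize (x - e) / (1 - e * (starRingEnd ℂ) x) = α at *
    generalize 1 - (starRingEnd ℂ) e * x = D5 at *
    field_simp

lemma geodesic_form {p w : H} {x : ℂ} (hp : ‖p‖ < 1) (hw : ‖w‖ = 1) (hx : ‖x‖ < 1) :
    ∃ (a b : H) (ω α : ℂ), inner ℂ a b = 0 ∧ ‖a‖ ^ 2 + ‖b‖ ^ 2 = 1 ∧ ‖ω‖ = 1 ∧ ‖α‖ < 1 ∧
      ∀ z ∈ Metric.ball (0 : ℂ) 1, ballAut p (mob x z • w) =
        a + (ω * (α - z) / (1 - (starRingEnd ℂ) α * z)) • b := by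
  have hs0 : 0 < 1 - ‖p‖ ^ 2 := by nlinarith [norm_nonneg p]
  have hs := Real.sq_sqrt hs0.le
  have hs1 := Real.sqrt_pos.mpr hs0
  set s := Real.sqrt (1 - ‖p‖ ^ 2) with hsdef
  have hne : (1 : ℂ) + s ≠ 0 := by
    have : (1 + s : ℝ) ≠ 0 := by positivity
    exact_mod_cast this
  set c : ℂ := inner ℂ p w with hc
  have hcn : ‖c‖ < 1 := by
    have := norm_inner_le_norm (𝕜 := ℂ) p w
    rw [hw, mul_one] at this
    exact this.trans_lt hp
  have hcn' : ‖(starRingEnd ℂ) c‖ < 1 := by rwa [RCLike.norm_conj]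
  have hN : 1 - c * (starRingEnd ℂ) c ≠ 0 := by
    have := mob_den_ne hcn' hcn'.le
    rwa [Complex.conj_conj] at this
  have hpp : (inner ℂ p p : ℂ) = 1 - (s : ℂ) ^ 2 := by
    rw [inner_self_eq_norm_sq_to_K, ← Complex.ofReal_pow, hs]; simp
  have hww : (inner ℂ w w : ℂ) = 1 := by
    rw [inner_self_eq_norm_sq_to_K, hw]; simp
  have hwp : (inner ℂ w p : ℂ) = (starRingEnd ℂ) c := (inner_conj_symm w p).symm
  set q : H := (s : ℂ) • w + (c * (1 + (s : ℂ))⁻¹) • p with hq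
  have hpq : (inner ℂ p q : ℂ) = c := by
    simp only [hq, inner_add_right, inner_smul_right, hpp, ← hc]
    field_simp
    ring
  have hqp : (inner ℂ q p : ℂ) = (starRingEnd ℂ) c := by
    rw [← inner_conj_symm, hpq]
  have hqq : (inner ℂ q q : ℂ) = (s : ℂ) ^ 2 + c * (starRingEnd ℂ) c := by
    simp only [hq, inner_add_right, inner_smul_right, inner_add_left, inner_smul_left, hpp, ← hc,
      hwp, hww, map_mul, map_inv₀, map_add, map_one, Complex.conj_ofReal]
    field_simp
    ring
  obtain ⟨ω, α, hω, hα, hform⟩ := mob_comp_form hx hcn'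
  set N := (1 - c * (starRingEnd ℂ) c) with hNdef
  have hNc : (starRingEnd ℂ) N = N := by simp [hNdef, mul_comm]
  refine ⟨N⁻¹ • (p - (starRingEnd ℂ) c • q), N⁻¹ • (q - c • p), ω, α, ?_, ?_, hω, hα, ?_⟩
  · simp only [inner_smul_right, inner_smul_left, inner_sub_left, inner_sub_right, hpp, hpq, hqp,
      hqq, Complex.conj_conj]
    ring
  · have h : (inner ℂ (N⁻¹ • (p - (starRingEnd ℂ) c • q)) (N⁻¹ • (p - (starRingEnd ℂ) c • q)) : ℂ) +
      inner ℂ (N⁻¹ • (q - c • p)) (N⁻¹ • (q - c • p)) = 1 := by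
      simp only [inner_smul_right, inner_smul_left, inner_sub_left, inner_sub_right, hpp, hpq, hqp,
        hqq, Complex.conj_conj, map_inv₀, hNc]
      field_simp
      rw [hNdef]
      ring
    rw [inner_self_eq_norm_sq_to_K, inner_self_eq_norm_sq_to_K] at h
    apply Complex.ofReal_injective
    push_cast
    exact h
  · intro z hz
    rw [← hform z hz]
    have hz' := mem_ball_zero_iff.mp hz
    have hζ := mob_lt hx hz'
    generalize mob x z = ζ at *
    have hden : 1 - c * ζ ≠ 0 := by
      have := mob_den_ne hcn' hζ.le
      rwa [Complex.conj_conj] at this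
    unfold ballAut mob
    rw [← hsdef, inner_smul_right, ← hc, Complex.conj_conj, hq]
    have hden' : 1 - ζ * c ≠ 0 := by rwa [mul_comm]
    push_cast
    match_scalars
    · field_simp
      rw [hNdef]
      ring
    · field_simp
      rw [hNdef]
      ring

/-- The linear disc is a 2-extremal. -/
lemma no_interp {u : ℂ → ℂ} {U : Set ℂ} 
    (hUc : Metric.closedBall (0 : ℂ) 1 ⊆ U) (hd : DifferentiableOn ℂ u U)
    (hm : ∀ z ∈ U, u z ∈ Metric.ball (0 : ℂ) 1) {x y : ℂ} (hx : ‖x‖ < 1) (hy : ‖y‖ < 1)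
    (hxy : x ≠ y) (hux : u x = x) (huy : u y = y) : False := by
  have hbU : Metric.ball (0 : ℂ) 1 ⊆ U := Metric.ball_subset_closedBall.trans hUc
  have hum : Set.MapsTo u (Metric.ball 0 1) (Metric.ball 0 1) := fun z hz => hm z (hbU hz)
  set v : ℂ → ℂ := fun z => mob x (u (mob x z)) with hv
  have hvd : DifferentiableOn ℂ v (Metric.ball 0 1) :=
    (mob_diff_ball hx).comp ((hd.mono hbU).comp (mob_diff_ball hx) (mob_maps hx))
      (hum.comp (mob_maps hx))
  have hvm : Set.MapsTo v (Metric.ball 0 1) (Metric.ball 0 1) :=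
    (mob_maps hx).comp (hum.comp (mob_maps hx))
  have hv0 : v 0 = 0 := by simp only [hv, mob_zero, hux, mob_self]
  set μ := mob x y with hμ
  have hμb : μ ∈ Metric.ball (0 : ℂ) 1 := mem_ball_zero_iff.mpr (mob_lt hx hy)
  have hμ0 : μ ≠ 0 := by
    intro h
    apply hxy
    have := mob_invol hx hy.le
    rw [← hμ, h, mob_zero] at this
    exact this
  have hvμ : v μ = μ := by
    simp only [hv, hμ]
    rw [mob_invol hx hy.le, huy]
  have hsl : dslope v 0 μ = 1 := by
    have := sub_smul_dslope v 0 μ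
    rw [hv0, hvμ] at this
    simp only [sub_zero, smul_eq_mul] at this
    exact mul_left_cancel₀ hμ0 (by rw [this, mul_one])
  have hid := schwarz_eq hvd hvm hv0 hμb (by rw [hsl]; simp)
  rw [hsl] at hid
  have hEq : Set.EqOn u id (Metric.ball (0 : ℂ) 1) := by
    intro z hz
    have h1 := hid _ (mob_maps hx hz)
    have hz' := mem_ball_zero_iff.mp hz
    simp only [hv, smul_eq_mul, mul_one] at h1
    rw [mob_invol hx hz'.le] at h1
    have h2 := congrArg (mob x) h1
    rwa [mob_invol hx hz'.le, mob_invol hx (mem_ball_zero_iff.mp (hum hz)).le] at h2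
  have hEq' : Set.EqOn u id (Metric.closedBall (0 : ℂ) 1) := by
    refine hEq.of_subset_closure (hd.continuousOn.mono hUc) continuousOn_id
      Metric.ball_subset_closedBall ?_
    rw [closure_ball _ one_ne_zero]
  have h1 : (1 : ℂ) ∈ Metric.closedBall (0 : ℂ) 1 := by simp
  have h2 := hm 1 (hUc h1)
  rw [hEq' h1] at h2
  simp at h2

end Helpers

theorem stmt7 {n : ℕ} (hn : 2 ≤ n) (f : ℂ → EuclideanSpace ℂ (Fin n))
    (h3 : IsMExtremal (Metric.ball (0 : EuclideanSpace ℂ (Fin n)) 1) 3 f)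
    (h2 : ¬ IsMExtremal (Metric.ball (0 : EuclideanSpace ℂ (Fin n)) 1) 2 f) :
    ∃ φ : EuclideanSpace ℂ (Fin n) → EuclideanSpace ℂ (Fin n),
      IsAutomorphismOf (Metric.ball (0 : EuclideanSpace ℂ (Fin n)) 1) φ ∧
      ∃ a₁ : ℝ, 0 ≤ a₁ ∧ a₁ < 1 ∧ ∃ ω α : ℂ, ‖ω‖ = 1 ∧ α ∈ 𝔻 ∧
        ∀ z ∈ 𝔻, f z =
          φ (EuclideanSpace.single (⟨0, by omega⟩ : Fin n) ((a₁ : ℂ) * z) +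
             EuclideanSpace.single (⟨1, by omega⟩ : Fin n)
               (((Real.sqrt (1 - a₁ ^ 2) : ℝ) : ℂ) * z *
                 (ω * (α - z) / (1 - (starRingEnd ℂ) α * z)))) := by
  obtain ⟨hfd, hfm, hext⟩ := h3
  have h0b : (0 : ℂ) ∈ 𝔻 := by simp [𝔻]
  have hP : ‖f 0‖ < 1 := mem_ball_zero_iff.mp (hfm 0 h0b)
  set P := f 0 with hPdef
  obtain ⟨hAd, hAm, -⟩ := ballAut_isAut hP
  have hfm' : Set.MapsTo f (Metric.ball 0 1) (Metric.ball 0 1) := hfm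
  set F : ℂ → EuclideanSpace ℂ (Fin n) := fun z => ballAut P (f z) with hF
  have hFd : DifferentiableOn ℂ F (Metric.ball 0 1) := hAd.comp hfd hfm'
  have hFm : Set.MapsTo F (Metric.ball 0 1) (Metric.ball 0 1) := hAm.comp hfm'
  have hF0 : F 0 = 0 := ballAut_self hP
  have hfF : ∀ z ∈ Metric.ball (0 : ℂ) 1, f z = ballAut P (F z) := fun z hz =>
    (ballAut_invol hP (mem_ball_zero_iff.mp (hfm z hz)).le).symm
  set g := dslope F 0 with hg
  have hFg : ∀ z, F z = z • g z := by
    intro z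
    have := sub_smul_dslope F 0 z
    rw [hF0] at this
    simpa using this.symm
  have hgd : DifferentiableOn ℂ g (Metric.ball 0 1) :=
    (Complex.differentiableOn_dslope (Metric.ball_mem_nhds _ one_pos)).mpr hFd
  -- the factor `g` takes values in the open ball
  have hgm : Set.MapsTo g (Metric.ball 0 1) (Metric.ball 0 1) := by
    by_contra hcon
    simp only [Set.MapsTo, not_forall, mem_ball_zero_iff (a := g _), not_lt] at hcon
    obtain ⟨z₀, hz₀, hz₁⟩ := hcon
    have hlin := schwarz_eq hFd hFm hF0 hz₀ hz₁
    have hv1 : ‖g z₀‖ = 1 := by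
      refine le_antisymm ?_ hz₁
      have := Complex.norm_dslope_le_div_of_mapsTo_ball (R₂ := 1) hFd
        (by rw [hF0]; exact hFm.mono_right Metric.ball_subset_closedBall) hz₀
      simpa using this
    change ∀ y ∈ Metric.ball (0 : ℂ) 1, F y = y • g z₀ at hlin
    generalize g z₀ = v at *
    apply h2
    refine ⟨hfd, hfm, ?_⟩
    rintro lam hinj hlam ⟨U, h, -, hUc, hhd, hhm, hh⟩
    have hvv : (inner ℂ v v : ℂ) = 1 := by
      rw [inner_self_eq_norm_sq_to_K, hv1]; simp
    have hfix : ∀ j, inner ℂ v (ballAut P (h (lam j))) = lam j := by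
      intro j
      rw [hh j]
      change inner ℂ v (F (lam j)) = lam j
      rw [hlin _ (hlam j), inner_smul_right, hvv, mul_one]
    refine no_interp (u := fun z => inner ℂ v (ballAut P (h z))) hUc ?_ ?_
      (mem_ball_zero_iff.mp (hlam 0)) (mem_ball_zero_iff.mp (hlam 1)) ?_ (hfix 0) (hfix 1)
    · exact (innerSL ℂ v).differentiable.comp_differentiableOn (hAd.comp hhd hhm)
    · intro z hz
      rw [mem_ball_zero_iff]
      refine (norm_inner_le_norm _ _).trans_lt ?_
      rw [hv1, one_mul]
      exact mem_ball_zero_iff.mp (hAm (hhm z hz))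
    · intro h
      have := hinj h
      simp at this
  -- `g` is a weak 2-extremal
  have hhalf : ‖(1 / 2 : ℂ)‖ < 1 := by norm_num
  have hhalf' : ‖(-(1 / 2) : ℂ)‖ < 1 := by norm_num
  obtain ⟨w, hw, hgw⟩ := geodesic_of_ext hgd hgm hhalf hhalf' (by
    rintro ⟨U, h, hUo, hUc, hhd, hhm, hx, hy⟩
    have hinj : Function.Injective (![0, 1 / 2, -(1 / 2)] : Fin 3 → ℂ) := by
      intro i j hij
      fin_cases i <;> fin_cases j <;> first | rfl | (exfalso; norm_num at hij)
    have hmem : ∀ j, (![0, 1 / 2, -(1 / 2)] : Fin 3 → ℂ) j ∈ 𝔻 := by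
      intro j
      apply mem_ball_zero_iff.mpr
      fin_cases j <;> norm_num
    refine hext ![0, 1 / 2, -(1 / 2)] hinj hmem ?_
    have hkd : DifferentiableOn ℂ (fun z => z • h z) U := differentiableOn_id.smul hhd
    refine ⟨U ∩ (fun z => z • h z) ⁻¹' Metric.ball 0 1, fun z => ballAut P (z • h z),
      hkd.continuousOn.isOpen_inter_preimage hUo Metric.isOpen_ball, ?_, ?_, ?_, ?_⟩
    · intro z hz
      refine ⟨hUc hz, ?_⟩
      have h1 := mem_ball_zero_iff.mp (hhm z (hUc hz))
      have h2 := mem_closedBall_zero_iff.mp hz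
      simp only [Set.mem_preimage, mem_ball_zero_iff, norm_smul]
      nlinarith [norm_nonneg (h z), norm_nonneg z]
    · exact hAd.comp (hkd.mono Set.inter_subset_left) fun z hz => hz.2
    · intro z hz
      exact hAm hz.2
    · have key : ∀ z ∈ Metric.ball (0 : ℂ) 1, z • h z = z • g z →
          ballAut P (z • h z) = f z := by
        intro z hz he
        rw [he, ← hFg, hfF z hz]
      intro j
      refine key _ (hmem j) ?_
      fin_cases j
      · simp
      · simp only [one_div] at hx
        simp [hx]
      · simp only [one_div] at hy
        simp [hy])
  have hp : ‖g (1 / 2)‖ < 1 := mem_ball_zero_iff.mp (hgm (mem_ball_zero_iff.mpr hhalf))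
  obtain ⟨a, b, ω, α, hab, hnorm, hω, hα, hform⟩ := geodesic_form hp hw hhalf
  have hg0 : ‖g 0‖ < 1 := mem_ball_zero_iff.mp (hgm h0b)
  have hb : b ≠ 0 := by
    intro hb
    rw [hgw 0 h0b, hform 0 h0b, hb] at hg0
    rw [hb] at hnorm
    simp at hg0 hnorm
    rcases hnorm with h | h <;> linarith [norm_nonneg a]
  have hbpos : 0 < ‖b‖ := norm_pos_iff.mpr hb
  have hsqrt : Real.sqrt (1 - ‖a‖ ^ 2) = ‖b‖ := by
    rw [show 1 - ‖a‖ ^ 2 = ‖b‖ ^ 2 by linarith, Real.sqrt_sq hbpos.le]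
  -- an adapted orthonormal basis
  set i₀ : Fin n := ⟨0, by omega⟩ with hi₀
  set i₁ : Fin n := ⟨1, by omega⟩ with hi₁
  have hne : i₀ ≠ i₁ := by simp [hi₀, hi₁]
  obtain ⟨B, hB0, hB1⟩ : ∃ B : OrthonormalBasis (Fin n) ℂ (EuclideanSpace ℂ (Fin n)),
      a = (‖a‖ : ℂ) • B i₀ ∧ b = (‖b‖ : ℂ) • B i₁ := by
    have hbn : (‖b‖ : ℂ) ≠ 0 := by exact_mod_cast hbpos.ne'
    let v : Fin n → EuclideanSpace ℂ (Fin n) := fun i =>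
      if i = i₀ then (‖a‖ : ℂ)⁻¹ • a else (‖b‖ : ℂ)⁻¹ • b
    let S : Set (Fin n) := {i | i = i₁ ∨ (i = i₀ ∧ a ≠ 0)}
    have hv1 : v i₁ = (‖b‖ : ℂ)⁻¹ • b := if_neg hne.symm
    have hv0 : v i₀ = (‖a‖ : ℂ)⁻¹ • a := if_pos rfl
    have hba : inner ℂ b a = (0 : ℂ) := by rw [← inner_conj_symm, hab, map_zero]
    have hS : Orthonormal ℂ (S.domRestrict v) := by
      constructor
      · rintro ⟨i, rfl | ⟨rfl, ha⟩⟩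
        · simp only [Set.domRestrict_apply, hv1, norm_smul, norm_inv, Complex.norm_real, norm_norm]
          exact inv_mul_cancel₀ hbpos.ne'
        · simp only [Set.domRestrict_apply, hv0, norm_smul, norm_inv, Complex.norm_real, norm_norm]
          exact inv_mul_cancel₀ (norm_ne_zero_iff.mpr ha)
      · rintro ⟨i, rfl | ⟨rfl, ha⟩⟩ ⟨j, rfl | ⟨rfl, ha'⟩⟩ hij
        · exact absurd rfl hij
        · simp only [Set.domRestrict_apply, hv0, hv1, inner_smul_left, inner_smul_right, hba, mul_zero]
        · simp only [Set.domRestrict_apply, hv0, hv1, inner_smul_left, inner_smul_right, hab, mul_zero]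
        · exact absurd rfl hij
    obtain ⟨B, hB⟩ := hS.exists_orthonormalBasis_extension_of_card_eq (by simp)
    refine ⟨B, ?_, ?_⟩
    · by_cases ha : a = 0
      · simp [ha]
      · have han : (‖a‖ : ℂ) ≠ 0 := by exact_mod_cast norm_ne_zero_iff.mpr ha
        rw [hB i₀ (Or.inr ⟨rfl, ha⟩), hv0, smul_inv_smul₀ han]
    · rw [hB i₁ (Or.inl rfl), hv1, smul_inv_smul₀ hbn]
  have hLm : ∀ z ∈ Metric.ball (0 : EuclideanSpace ℂ (Fin n)) 1,
      B.repr.symm z ∈ Metric.ball (0 : EuclideanSpace ℂ (Fin n)) 1 := by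
    intro z hz
    rw [mem_ball_zero_iff] at *
    rwa [LinearIsometryEquiv.norm_map]
  have hLm' : ∀ z ∈ Metric.ball (0 : EuclideanSpace ℂ (Fin n)) 1,
      B.repr z ∈ Metric.ball (0 : EuclideanSpace ℂ (Fin n)) 1 := by
    intro z hz
    rw [mem_ball_zero_iff] at *
    rwa [LinearIsometryEquiv.norm_map]
  refine ⟨fun z => ballAut P (B.repr.symm z), ⟨hAd.comp ?_ hLm, fun z hz => hAm (hLm z hz),
    fun z => B.repr (ballAut P z), ?_, fun z hz => hLm' _ (hAm hz), ?_, ?_⟩,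
    ‖a‖, norm_nonneg a, ?_, ω, α, hω, mem_ball_zero_iff.mpr hα, ?_⟩
  · exact B.repr.symm.toContinuousLinearEquiv.differentiable.differentiableOn
  · exact B.repr.toContinuousLinearEquiv.differentiable.comp_differentiableOn hAd
  · intro z hz
    simp only
    rw [ballAut_invol hP (mem_ball_zero_iff.mp (hLm z hz)).le, LinearIsometryEquiv.apply_symm_apply]
  · intro z hz
    simp only
    rw [LinearIsometryEquiv.symm_apply_apply, ballAut_invol hP (mem_ball_zero_iff.mp hz).le]
  · nlinarith [norm_nonneg a]
  · intro z hz
    rw [hfF z hz, hFg, hgw z hz, hform z hz, hsqrt]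
    congr 1
    have hsing : ∀ (i : Fin n) (c : ℂ), B.repr.symm (EuclideanSpace.single i c) = c • B i := by
      intro i c
      rw [← B.repr_symm_single i, ← map_smul]
      congr 1
      ext j
      simp
    rw [map_add, hsing, hsing]
    conv_lhs => rw [hB0, hB1]
    module

end
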